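/- Let K be ℝ or ℂ and let (J, B) be a pseudo-euclidean Jordan algebra over K such that the vector space of all associative symmetric bilinear forms on J is one-dimensional (i.e., ind(J) = 1). Then either J is simple (J² ≠ {0} and the only ideals of J are {0} and J) or J is the one-dimensional algebra with zero product. -/

import Mathlib

variable (K : Type*) [RCLike K]
variable (J : Type*) [NonUnitalNonAssocCommRing J] [Module K J]
  [SMulCommClass K J J] [IsScalarTower K J J] [FiniteDimensional K J]

/-- The space of all associative symmetric bilinear forms on the algebra `J`. -/
def assocSymmForms : Submodule K (J →ₗ[K] J →ₗ[K] K) where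
  carrier := {T | (∀ x y : J, T x y = T y x) ∧ (∀ x y z : J, T (x * y) z = T x (y * z))}
  add_mem' := by
    rintro a b ⟨ha1, ha2⟩ ⟨hb1, hb2⟩
    exact ⟨fun x y => by simp [LinearMap.add_apply, ha1 x y, hb1 x y],
      fun x y z => by simp [LinearMap.add_apply, ha2 x y z, hb2 x y z]⟩
  zero_mem' := ⟨fun x y => by simp, fun x y z => by simp⟩
  smul_mem' := by
    rintro c a ⟨ha1, ha2⟩
    exact ⟨fun x y => by simp [LinearMap.smul_apply, ha1 x y],
      fun x y z => by simp [LinearMap.smul_apply, ha2 x y z]⟩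

/-!
Over a field of characteristic zero, index one makes the trace form `tr (L (x * y))`, where `L x`
is multiplication by `x`, a multiple `c • B` of the given form.

If `c ≠ 0`, the trace form is nondegenerate. An ideal of square zero lies in its radical, so every
ideal `I` meets its orthogonal trivially; the projection `π` onto `I` along the orthogonal is then
multiplicative, and comparing `B (π x) (π y)` with `B` forces `I` to be trivial.

If `c = 0`, there is no nonzero idempotent, since its trace would not vanish; hence every `L x` is
nilpotent. The operators `L x` form a Lie triple system, and the Lie algebra it generates has zero
trace form on `A`, because `L x` is self-adjoint for `B`. By Cartan's criterion its derived algebra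
kills a nonzero ideal. The `L x` commute on that ideal and are nilpotent, so they have a common
kernel vector `v`, and comparing `B v x * B v y` with `B` shows that `A` has dimension one
and zero product.
-/

section LinearAlgebra

open LinearMap (BilinForm)

lemma trace_eq_of_isAdjointPair {F V : Type*} [Field F] [AddCommGroup V] [Module F V]
    [FiniteDimensional F V] {B : BilinForm F V} (hB : B.Nondegenerate) {f g : Module.End F V}
    (h : LinearMap.IsAdjointPair B B f g) : LinearMap.trace F V f = LinearMap.trace F V g := by
  have hconj : (B.toDual hB).conj f = Module.Dual.transpose (R := F) g := by
    refine LinearMap.ext fun φ ↦ ?_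
    obtain ⟨x, rfl⟩ := (B.toDual hB).surjective φ
    ext y
    rw [LinearEquiv.conj_apply_apply, LinearEquiv.symm_apply_apply, BilinForm.toDual_def, h]
    rfl
  rw [← LinearMap.trace_conj' f (B.toDual hB), hconj, LinearMap.trace_transpose']

/- The roots of `2t³ - 3t² + t` are `0`, `1/2` and `1`, and `p` and `q` below are the spectral
projections for `1` and `1/2`; hence `2 tr l = 2 rank p + rank q`. -/
lemma trace_ne_zero_of_two_nsmul_pow_three {F V : Type*} [Field F] [CharZero F]
    [AddCommGroup V] [Module F V] [FiniteDimensional F V] {l : Module.End F V}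
    (hl : 2 • l ^ 3 - 3 • l ^ 2 + l = 0) (hne : l ≠ 0) : LinearMap.trace F V l ≠ 0 := by
  set p := 2 • l ^ 2 - l with hp
  set q := 4 • (l - l ^ 2) with hq
  have hpp : IsIdempotentElem p := by
    have : p * p - p = (2 • l + 1) * (2 • l ^ 3 - 3 • l ^ 2 + l) := by rw [hp]; noncomm_ring
    rwa [hl, mul_zero, sub_eq_zero] at this
  have hqq : IsIdempotentElem q := by
    have : q * q - q = (8 • l - 4) * (2 • l ^ 3 - 3 • l ^ 2 + l) := by rw [hq]; noncomm_ring
    rwa [hl, mul_zero, sub_eq_zero] at this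
  have hsum : 2 • l = 2 • p + q := by rw [hp, hq]; noncomm_ring
  intro htr
  have hrank : 2 * Module.finrank F (LinearMap.range p) + Module.finrank F (LinearMap.range q)
      = 0 := by
    have h := congrArg (LinearMap.trace F V) hsum
    rw [map_add, map_nsmul, map_nsmul, htr, smul_zero, nsmul_eq_mul,
      (LinearMap.IsIdempotentElem.isProj_range p hpp).trace,
      (LinearMap.IsIdempotentElem.isProj_range q hqq).trace] at h
    exact_mod_cast h.symm
  have hp0 : p = 0 := LinearMap.range_eq_bot.mp (Submodule.finrank_eq_zero.mp (by lia))
  have hq0 : q = 0 := LinearMap.range_eq_bot.mp (Submodule.finrank_eq_zero.mp (by lia))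
  rw [hp0, hq0, smul_zero, add_zero, ← Nat.cast_smul_eq_nsmul F] at hsum
  exact hne ((smul_eq_zero.mp hsum).resolve_left (by norm_num))

variable {R M : Type*} [Ring R] [AddCommGroup M] [Module R M]

lemma inf_ker_ne_bot_of_isNilpotent {f : Module.End R M} (hf : IsNilpotent f)
    {V : Submodule R M} (hV : V ≠ ⊥) (hmaps : ∀ v ∈ V, f v ∈ V) : V ⊓ LinearMap.ker f ≠ ⊥ := by
  refine mt (fun h ↦ ?_) hV
  have hker (v : M) (hv : v ∈ V) (hfv : f v = 0) : v = 0 :=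
    (Submodule.mem_bot R).mp (h ▸ ⟨hv, hfv⟩)
  have hpow (n : ℕ) (v : M) (hv : v ∈ V) (hfv : (f ^ n) v = 0) : v = 0 := by
    induction n generalizing v with
    | zero => simpa using hfv
    | succ n ih => exact hker v hv (ih (f v) (hmaps v hv) (by rwa [pow_succ] at hfv))
  obtain ⟨n, hn⟩ := hf
  exact (Submodule.eq_bot_iff V).mpr fun v hv ↦ hpow n v hv (by rw [hn, LinearMap.zero_apply])

lemma exists_mem_ne_zero_forall_apply_eq_zero [IsArtinian R M] {ι : Type*}
    {f : ι → Module.End R M} (hf : ∀ i, IsNilpotent (f i)) {V : Submodule R M} (hV : V ≠ ⊥)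
    (hmaps : ∀ i, ∀ v ∈ V, f i v ∈ V) (hcomm : ∀ i j, ∀ v ∈ V, f i (f j v) = f j (f i v)) :
    ∃ v ∈ V, v ≠ 0 ∧ ∀ i, f i v = 0 := by
  induction V using WellFoundedLT.induction with | _ V ih
  by_cases! hker : ∀ i, V ≤ LinearMap.ker (f i)
  · obtain ⟨v, hv, hv0⟩ := V.exists_mem_ne_zero_of_ne_bot hV
    exact ⟨v, hv, hv0, fun i ↦ hker i hv⟩
  obtain ⟨i, hi⟩ := hker
  have hmaps' (j : ι) (v : M) (hv : v ∈ V ⊓ LinearMap.ker (f i)) :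
      f j v ∈ V ⊓ LinearMap.ker (f i) := by
    refine ⟨hmaps j v hv.1, ?_⟩
    rw [SetLike.mem_coe, LinearMap.mem_ker, hcomm i j v hv.1, LinearMap.mem_ker.mp hv.2, map_zero]
  obtain ⟨v, hv, hv0⟩ := ih _ (inf_lt_left.mpr hi)
    (inf_ker_ne_bot_of_isNilpotent (hf i) hV (hmaps i)) hmaps' fun j k v hv ↦ hcomm j k v hv.1
  exact ⟨v, hv.1, hv0⟩

end LinearAlgebra

section LieTripleSystems

attribute [local instance] LieRing.ofAssociativeRing

section General

variable {R 𝔤 : Type*} [CommRing R] [LieRing 𝔤] [LieAlgebra R 𝔤] {T : Submodule R 𝔤}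

/-- A Lie triple system inside a Lie algebra: a subspace closed under `⁅⁅x, y⁆, z⁆`. -/
def IsLieTripleSystem (T : Submodule R 𝔤) : Prop :=
  ∀ x ∈ T, ∀ y ∈ T, ∀ z ∈ T, ⁅⁅x, y⁆, z⁆ ∈ T

/-- The subspace `[T, T]` spanned by the commutators of elements of a subspace `T`. -/
def commutatorSpan (T : Submodule R 𝔤) : Submodule R 𝔤 :=
  Submodule.span R {d | ∃ x ∈ T, ∃ y ∈ T, ⁅x, y⁆ = d}

namespace IsLieTripleSystem

lemma lie_mem (hT : IsLieTripleSystem T) {d z : 𝔤} (hd : d ∈ commutatorSpan T) (hz : z ∈ T) :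
    ⁅d, z⁆ ∈ T := by
  induction hd using Submodule.span_induction with
  | mem d h =>
    obtain ⟨x, hx, y, hy, rfl⟩ := h
    exact hT x hx y hy z hz
  | zero => simp
  | add d d' _ _ h h' => rw [add_lie]; exact add_mem h h'
  | smul c d _ h => rw [smul_lie]; exact T.smul_mem c h

lemma lie_mem_commutatorSpan (hT : IsLieTripleSystem T) {d d' : 𝔤} (hd : d ∈ commutatorSpan T)
    (hd' : d' ∈ commutatorSpan T) : ⁅d, d'⁆ ∈ commutatorSpan T := by
  induction hd' using Submodule.span_induction with
  | mem d' h =>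
    obtain ⟨x, hx, y, hy, rfl⟩ := h
    rw [leibniz_lie]
    exact add_mem (Submodule.subset_span ⟨_, hT.lie_mem hd hx, y, hy, rfl⟩)
      (Submodule.subset_span ⟨x, hx, _, hT.lie_mem hd hy, rfl⟩)
  | zero => simp
  | add d d' _ _ h h' => rw [lie_add]; exact add_mem h h'
  | smul c d _ h => rw [lie_smul]; exact Submodule.smul_mem _ c h

/-- The Lie algebra `T + [T, T]` generated by a Lie triple system `T`. -/
def toLieSubalgebra (hT : IsLieTripleSystem T) : LieSubalgebra R 𝔤 where
  __ := T ⊔ commutatorSpan T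
  lie_mem' := by
    intro f g hf hg
    obtain ⟨x, hx, d, hd, rfl⟩ := Submodule.mem_sup.mp hf
    obtain ⟨y, hy, d', hd', rfl⟩ := Submodule.mem_sup.mp hg
    have h : ⁅x + d, y + d'⁆ = (⁅d, y⁆ - ⁅d', x⁆) + (⁅x, y⁆ + ⁅d, d'⁆) := by
      rw [add_lie, lie_add, lie_add, ← lie_skew x d']
      abel
    rw [h]
    exact Submodule.add_mem_sup (sub_mem (hT.lie_mem hd hy) (hT.lie_mem hd' hx))
      (add_mem (Submodule.subset_span ⟨x, hx, y, hy, rfl⟩) (hT.lie_mem_commutatorSpan hd hd'))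

end IsLieTripleSystem

end General

section TraceForm

variable {R M : Type*} [CommRing R] [AddCommGroup M] [Module R M]
  {T : Submodule R (Module.End R M)}

lemma trace_mul_eq_zero_of_mem_commutatorSpan {f d : Module.End R M}
    (hf : ∀ x ∈ T, ∀ y ∈ T, LinearMap.trace R M (f * ⁅x, y⁆) = 0) (hd : d ∈ commutatorSpan T) :
    LinearMap.trace R M (f * d) = 0 := by
  induction hd using Submodule.span_induction with
  | mem d h =>
    obtain ⟨x, hx, y, hy, rfl⟩ := h
    exact hf x hx y hy
  | zero => simp
  | add d d' _ _ h h' => simp [mul_add, h, h']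
  | smul c d _ h => simp [h]

lemma IsLieTripleSystem.trace_mul_of_mem_commutatorSpan (hT : IsLieTripleSystem T)
    (htr : ∀ x ∈ T, ∀ y ∈ T, LinearMap.trace R M (x * y) = 0) {d d' : Module.End R M}
    (hd : d ∈ commutatorSpan T) (hd' : d' ∈ commutatorSpan T) :
    LinearMap.trace R M (d * d') = 0 := by
  refine trace_mul_eq_zero_of_mem_commutatorSpan (fun x hx y hy ↦ ?_) hd'
  have h := htr _ (hT.lie_mem hd hx) y hy
  rw [Ring.lie_def, sub_mul, map_sub, mul_assoc x d y, LinearMap.trace_mul_comm R x] at h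
  rw [Ring.lie_def, mul_sub, map_sub, ← mul_assoc, ← h, mul_assoc d y x]

lemma IsLieTripleSystem.traceForm_toLieSubalgebra (hT : IsLieTripleSystem T)
    (htr₂ : ∀ x ∈ T, ∀ y ∈ T, LinearMap.trace R M (x * y) = 0)
    (htr₃ : ∀ x ∈ T, ∀ y ∈ T, ∀ z ∈ T, LinearMap.trace R M (x * ⁅y, z⁆) = 0) :
    LieModule.traceForm R hT.toLieSubalgebra M = 0 := by
  ext ⟨f, hf⟩ ⟨g, hg⟩
  obtain ⟨x, hx, d, hd, rfl⟩ := Submodule.mem_sup.mp hf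
  obtain ⟨y, hy, d', hd', rfl⟩ := Submodule.mem_sup.mp hg
  change LinearMap.trace R M ((x + d) * (y + d')) = 0
  rw [mul_add, add_mul, add_mul, map_add, map_add, map_add, LinearMap.trace_mul_comm R d,
    htr₂ x hx y hy, trace_mul_eq_zero_of_mem_commutatorSpan (htr₃ y hy) hd,
    trace_mul_eq_zero_of_mem_commutatorSpan (htr₃ x hx) hd',
    hT.trace_mul_of_mem_commutatorSpan htr₂ hd hd']
  simp

end TraceForm

/- By Cartan's criterion the derived algebra acts nilpotently, so by Engel's theorem its common
kernel is nonzero. -/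
lemma exists_lieSubmodule_ne_bot_lie_comm_of_traceForm_eq_zero {F 𝔤 M : Type*} [Field F]
    [CharZero F] [LieRing 𝔤] [LieAlgebra F 𝔤] [AddCommGroup M] [Module F M] [LieRingModule 𝔤 M]
    [LieModule F 𝔤 M] [FiniteDimensional F M] [Nontrivial M]
    (h : LieModule.traceForm F 𝔤 M = 0) :
    ∃ N : LieSubmodule F 𝔤 M, N ≠ ⊥ ∧ ∀ x y : 𝔤, ∀ m ∈ N, ⁅x, ⁅y, m⁆⁆ = ⁅y, ⁅x, m⁆⁆ := by
  let D := LieAlgebra.derivedSeries F 𝔤 1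
  have hD : LieModule.IsNilpotent D M :=
    LieModule.isNilpotent_derivedSeries_of_traceForm_eq_zero h
  have hlie (x y : 𝔤) : ⁅x, y⁆ ∈ D :=
    LieSubmodule.lie_mem_lie (LieSubmodule.mem_top x) (LieSubmodule.mem_top y)
  have hmem (m : M) : m ∈ LieModule.maxTrivSubmodule F D M ↔ ∀ d ∈ D, ⁅d, m⁆ = 0 :=
    (LieModule.mem_maxTrivSubmodule F D M m).trans Subtype.forall
  let N : LieSubmodule F 𝔤 M :=
    { (LieModule.maxTrivSubmodule F D M : Submodule F M) with
      lie_mem := fun {x m} hm ↦ (hmem _).mpr fun d hd ↦ by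
        rw [leibniz_lie, (hmem m).mp hm _ (lie_mem_left F 𝔤 D d x hd), (hmem m).mp hm d hd,
          lie_zero, add_zero] }
  refine ⟨N, fun hN ↦ ?_, fun x y m hm ↦ ?_⟩
  · have := LieModule.nontrivial_max_triv_of_isNilpotent F D M
    obtain ⟨⟨m, hm⟩, hm0⟩ := exists_ne (0 : LieModule.maxTrivSubmodule F D M)
    exact hm0 (Subtype.ext (by simpa [hN] using (show m ∈ N from hm)))
  · rw [← sub_eq_zero, ← lie_lie]
    exact (hmem m).mp hm _ (hlie x y)

end LieTripleSystems

namespace JordanAlgebra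

open LinearMap (BilinForm)
open Polynomial hiding smul_pow

attribute [local instance] LieRing.ofAssociativeRing

section MultiplicationOperators

lemma mul_linearized {A : Type*} [NonUnitalNonAssocCommRing A] [IsCommJordan A]
    [IsAddTorsionFree A] (a b c d : A) :
    a * (b * c * d) + b * (c * a * d) + c * (a * b * d) =
      b * c * (a * d) + c * a * (b * d) + a * b * (c * d) := by
  have h := DFunLike.congr_fun (two_nsmul_lie_lmul_lmul_add_add_eq_zero a b c) d
  change 2 • ((a * (b * c * d) - b * c * (a * d)) + (b * (c * a * d) - c * a * (b * d)) +
    (c * (a * b * d) - a * b * (c * d))) = 0 at h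
  rw [← sub_eq_zero, ← (smul_eq_zero.mp h).resolve_left two_ne_zero]
  abel

variable {R A : Type*} [CommRing R] [NonUnitalNonAssocCommRing A] [Module R A]
  [SMulCommClass R A A] [IsScalarTower R A A]

local notation "L" => (LinearMap.mul R A : A →ₗ[R] Module.End R A)

/-- The value at `x` of the polynomial `X * f`. A Jordan algebra need not have a unit, so that
only polynomials without constant term can be evaluated in it. -/
noncomputable def evalXMul (x : A) : R[X] →ₗ[R] A :=
  LinearMap.applyₗ x ∘ₗ (aeval (L x)).toLinearMap

lemma evalXMul_apply (x : A) (f : R[X]) : evalXMul x f = aeval (L x) f x := rfl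

lemma evalXMul_mul (x : A) (f g : R[X]) :
    evalXMul x (f * g) = aeval (L x) f (evalXMul x g) := by
  rw [evalXMul_apply, map_mul]
  rfl

variable [IsCommJordan A]

lemma commute_lmul_lmul_sq (x : A) : Commute (L x) (L (x * x)) :=
  LinearMap.ext fun y ↦ (DFunLike.congr_fun (_root_.commute_lmul_lmul_sq x) y :)

variable [IsAddTorsionFree A]

lemma lmul_mul_mul (a b c : A) :
    L (a * (b * c)) = L a * L (b * c) + L b * L (a * c) + L c * L (a * b) -
      L b * L a * L c - L c * L a * L b := by
  ext d
  have h₁ := mul_linearized a b c d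
  have h₂ := mul_linearized d b c a
  simp only [LinearMap.sub_apply, LinearMap.add_apply, Module.End.mul_apply,
    LinearMap.mul_apply']
  have e₁ : d * (b * c * a) = a * (b * c) * d := by simp only [mul_comm]
  have e₂ : b * (c * d * a) = b * (a * (c * d)) := by simp only [mul_comm]
  have e₃ : c * (d * b * a) = c * (a * (b * d)) := by simp only [mul_comm]
  have e₄ : b * c * (d * a) + c * d * (b * a) + d * b * (c * a) =
      b * c * (a * d) + c * a * (b * d) + a * b * (c * d) := by
    rw [mul_comm d a, mul_comm (c * d), mul_comm (d * b), mul_comm d b, mul_comm b a]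
    abel
  rw [e₁, e₂, e₃, e₄, ← h₁, mul_comm c a] at h₂
  rw [← sub_eq_zero] at h₂ ⊢
  rw [← h₂]
  abel

lemma lie_lie_lmul_lmul_lmul (a b c : A) :
    ⁅⁅L a, L b⁆, L c⁆ = L (a * (b * c) - b * (a * c)) := by
  rw [map_sub, lmul_mul_mul, lmul_mul_mul b a c, mul_comm b a]
  simp only [Ring.lie_def]
  noncomm_ring

variable (R A) in
lemma isLieTripleSystem_range_lmul : IsLieTripleSystem (LinearMap.range L) := by
  rintro _ ⟨a, rfl⟩ _ ⟨b, rfl⟩ _ ⟨c, rfl⟩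
  exact ⟨_, (lie_lie_lmul_lmul_lmul a b c).symm⟩

lemma commute_lmul_pow_apply {S : Module.End R A} {x : A} (h₁ : Commute S (L x))
    (h₂ : Commute S (L (x * x))) (n : ℕ) : Commute S (L ((L x ^ n) x)) := by
  induction n using Nat.twoStepInduction with
  | zero => exact h₁
  | one => simpa using h₂
  | more n ih ih' =>
    have hrec : L ((L x ^ (n + 2)) x) = L x * L ((L x ^ (n + 1)) x) +
        L x * L ((L x ^ (n + 1)) x) + L ((L x ^ n) x) * L (x * x) -
        L x * L x * L ((L x ^ n) x) - L ((L x ^ n) x) * L x * L x := by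
      simpa only [pow_succ', Module.End.mul_apply, LinearMap.mul_apply'] using
        lmul_mul_mul (R := R) x x ((L x ^ n) x)
    rw [hrec]
    exact ((((h₁.mul_right ih').add_right (h₁.mul_right ih')).add_right
      (ih.mul_right h₂)).sub_right ((h₁.mul_right h₁).mul_right ih)).sub_right
      ((ih.mul_right h₁).mul_right h₁)

lemma commute_lmul_lmul_evalXMul (x : A) (f : R[X]) : Commute (L x) (L (evalXMul x f)) := by
  induction f using Polynomial.induction_on' with
  | add p q hp hq => simpa using hp.add_right hq
  | monomial n c =>
    simpa [evalXMul_apply, aeval_monomial, ← Algebra.smul_def] using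
      (commute_lmul_pow_apply (.refl _) (commute_lmul_lmul_sq x) n).smul_right c

lemma evalXMul_mul_evalXMul (x : A) (f g : R[X]) :
    evalXMul x f * evalXMul x g = evalXMul x (X * f * g) := by
  have hcomm : Commute (L (evalXMul x f)) (aeval (L x) g) := by
    induction g using Polynomial.induction_on' with
    | add p q hp hq => simpa using hp.add_right hq
    | monomial n c =>
      simpa [aeval_monomial, ← Algebra.smul_def] using
        ((commute_lmul_lmul_evalXMul x f).symm.pow_right n).smul_right c
  calc evalXMul x f * evalXMul x g = (L (evalXMul x f) * aeval (L x) g) x := rfl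
    _ = aeval (L x) g (x * evalXMul x f) := by rw [hcomm.eq, mul_comm x]; rfl
    _ = evalXMul x (X * f * g) := by
      rw [mul_comm (X * f), evalXMul_mul, evalXMul_mul, aeval_X, LinearMap.mul_apply']

lemma iterate_sq_eq_evalXMul (x : A) (k : ℕ) :
    (fun y ↦ y * y)^[k] x = evalXMul x (X ^ (2 ^ k - 1) : R[X]) := by
  induction k with
  | zero => simp [evalXMul_apply]
  | succ k ih =>
    rw [Function.iterate_succ_apply', ih, evalXMul_mul_evalXMul, ← pow_succ', ← pow_add]
    congr 2
    have := Nat.one_le_two_pow (n := k)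
    lia

lemma lmul_sq_mul_sq (x : A) :
    L (x * x * (x * x)) = 4 • (L x ^ 2 * L (x * x)) + L (x * x) ^ 2 - 4 • L x ^ 4 := by
  have hx4 : x * x * (x * x) = x * (x * (x * x)) := IsCommJordan.lmul_comm_rmul_rmul x x
  have hcomm : L (x * x) * L x = L x * L (x * x) := (commute_lmul_lmul_sq x).symm.eq
  have hcube : L (x * (x * x)) = 3 • (L x * L (x * x)) - 2 • L x ^ 3 := by
    rw [lmul_mul_mul]
    noncomm_ring
  have hcomm' : L (x * x) * L x * L x = L x * L x * L (x * x) := by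
    rw [hcomm, mul_assoc, hcomm, mul_assoc]
  rw [hx4, lmul_mul_mul, hcube, hcomm']
  noncomm_ring

lemma isNilpotent_lmul_of_sq {x : A} (hsq : IsNilpotent (L (x * x)))
    (hsq' : IsNilpotent (L (x * x * (x * x)))) : IsNilpotent (L x) := by
  have h₁₂ : Commute (L x) (L (x * x)) := commute_lmul_lmul_sq x
  have h₂₄ : Commute (L (x * x)) (L (x * x * (x * x))) := commute_lmul_lmul_sq (x * x)
  have h₁₄ : Commute (L x) (L (x * x * (x * x))) := by
    rw [lmul_sq_mul_sq]
    exact (((((Commute.refl _).pow_right 2).mul_right h₁₂).smul_right 4).add_right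
      (h₁₂.pow_right 2)).sub_right (((Commute.refl _).pow_right 4).smul_right 4)
  have hsum : 4 • L x ^ 4 = (4 • L x ^ 2 + L (x * x)) * L (x * x) - L (x * x * (x * x)) := by
    rw [lmul_sq_mul_sq]
    noncomm_ring
  have hfour : IsNilpotent (4 • L x ^ 4) := by
    have h₂ : Commute (4 • L x ^ 2 + L (x * x)) (L (x * x)) :=
      ((h₁₂.pow_left 2).smul_left 4).add_left (.refl _)
    have h₄ : Commute (4 • L x ^ 2 + L (x * x)) (L (x * x * (x * x))) :=
      ((h₁₄.pow_left 2).smul_left 4).add_left h₂₄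
    rw [hsum]
    exact (h₄.mul_left h₂₄).isNilpotent_sub (h₂.isNilpotent_mul_left hsq) hsq'
  obtain ⟨n, hn⟩ := hfour
  rw [smul_pow, ← pow_mul] at hn
  refine ⟨4 * n, LinearMap.ext fun y ↦ ?_⟩
  have hy : 4 ^ n • (L x ^ (4 * n)) y = 0 := DFunLike.congr_fun hn y
  exact (smul_eq_zero.mp hy).resolve_left (by positivity)

lemma isNilpotent_lmul_of_iterate_sq_eq_zero {x : A} {k : ℕ}
    (hx : (fun y ↦ y * y)^[k] x = 0) : IsNilpotent (L x) := by
  induction k generalizing x with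
  | zero => simp [show x = 0 from hx]
  | succ k ih =>
    have hx4 : (fun y : A ↦ y * y)^[k] (x * x * (x * x)) = 0 := by
      have h : (fun y : A ↦ y * y)^[k + 2] x = 0 := by
        rw [Function.iterate_succ_apply', hx, mul_zero]
      exact h
    exact isNilpotent_lmul_of_sq (ih hx) (ih hx4)

end MultiplicationOperators

section Idempotents

variable {F A : Type*} [Field F] [NonUnitalNonAssocCommRing A] [Module F A]
  [SMulCommClass F A A] [IsScalarTower F A A] [FiniteDimensional F A] [IsCommJordan A]

local notation "L" => (LinearMap.mul F A : A →ₗ[F] Module.End F A)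

/- Write the minimal polynomial of `L x` as `X ^ k * q` with `q 0 ≠ 0`. If `s * X ^ (k + 1) ≡ 1`
modulo `q`, then `s * X ^ (k + 1)` is idempotent modulo `X ^ k * q`. -/
lemma exists_evalXMul_ne_zero_isIdempotentElem [IsAddTorsionFree A] {x : A}
    (hx : ∀ k : ℕ, (fun y ↦ y * y)^[k] x ≠ 0) :
    ∃ f : F[X], evalXMul x f ≠ 0 ∧ IsIdempotentElem (evalXMul x f) := by
  obtain ⟨q, hpq, hq⟩ := exists_eq_pow_rootMultiplicity_mul_and_not_dvd (minpoly F (L x))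
    (minpoly.ne_zero (Algebra.IsIntegral.isIntegral _)) 0
  rw [C_0, sub_zero] at hpq hq
  set k := rootMultiplicity 0 (minpoly F (L x))
  obtain ⟨s, t, hst⟩ : IsCoprime (X ^ (k + 1)) q :=
    (irreducible_X.coprime_iff_not_dvd.mpr hq).pow_left
  have hkill (f : F[X]) : evalXMul x (f * (X ^ k * q)) = 0 := by
    rw [evalXMul_apply, map_mul, ← hpq, minpoly.aeval, mul_zero, LinearMap.zero_apply]
  refine ⟨s * X ^ k, fun he ↦ hx k ?_, ?_⟩
  · have hk : (X ^ (2 ^ k - 1) : F[X]) =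
        X ^ (2 ^ k - 1 - k) * (X ^ (k + 1) * (s * X ^ k) + t * (X ^ k * q)) := by
      rw [← Nat.sub_add_cancel (Nat.le_sub_one_of_lt k.lt_two_pow_self), pow_add,
        Nat.add_sub_cancel]
      linear_combination (-X ^ (2 ^ k - 1 - k) * X ^ k) * hst
    rw [iterate_sq_eq_evalXMul (R := F), hk, evalXMul_mul, map_add, evalXMul_mul, he, hkill,
      map_zero, add_zero, map_zero]
  · have hs : X * (s * X ^ k) * (s * X ^ k) = s * X ^ k - s * t * (X ^ k * q) := by
      linear_combination (s * X ^ k) * hst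
    rw [IsIdempotentElem, evalXMul_mul_evalXMul, hs, map_sub, hkill, sub_zero]

lemma trace_lmul_ne_zero_of_isIdempotentElem [CharZero F] {e : A} (he : e ≠ 0)
    (hee : IsIdempotentElem e) : LinearMap.trace F A (L e) ≠ 0 := by
  have : IsAddTorsionFree A := .of_isTorsionFree F A
  refine trace_ne_zero_of_two_nsmul_pow_three ?_ fun h ↦ he ?_
  · have h := lmul_mul_mul (R := F) e e e
    rw [hee.eq, hee.eq, eq_comm, ← sub_eq_zero] at h
    rw [← neg_eq_zero, ← h]
    noncomm_ring
  · rw [← hee.eq]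
    exact DFunLike.congr_fun h e

end Idempotents

section AssociativeForms

variable {R A : Type*} [CommRing R] [NonUnitalNonAssocCommRing A] [Module R A]

/-- The ideals of a commutative algebra, as subspaces closed under multiplication operators. -/
def IsIdeal (I : Submodule R A) : Prop :=
  ∀ x, ∀ i ∈ I, x * i ∈ I

/-- Associativity of a bilinear form on an algebra. -/
def IsAssociative (B : BilinForm R A) : Prop :=
  ∀ x y z, B (x * y) z = B x (y * z)

/-- Every associative symmetric form is a multiple of `B`; for a nonzero associative symmetric
form `B` this means that the algebra has index one. -/
def SpansAssociativeForms (B : BilinForm R A) : Prop :=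
  ∀ T : BilinForm R A, T.IsSymm → IsAssociative T → ∃ c : R, T = c • B

variable {B : BilinForm R A} {I C : Submodule R A}

lemma IsIdeal.inf (hI : IsIdeal I) (hC : IsIdeal C) : IsIdeal (I ⊓ C) :=
  fun x i hi ↦ ⟨hI x i hi.1, hC x i hi.2⟩

lemma IsIdeal.orthogonal (hI : IsIdeal I) (hB : IsAssociative B) : IsIdeal (B.orthogonal I) := by
  intro x j hj i hi
  have h : B (x * i) j = 0 := hj _ (hI x i hi)
  rwa [mul_comm, hB] at h

lemma mul_eq_zero_of_mem_orthogonal (hnondeg : B.SeparatingLeft) (hB : IsAssociative B)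
    (hI : IsIdeal I) {i j : A} (hi : i ∈ I) (hj : j ∈ B.orthogonal I) : i * j = 0 := by
  refine hnondeg _ fun x ↦ ?_
  rw [hB, mul_comm]
  exact hI.orthogonal hB x j hj i hi

lemma projection_mul (hI : IsIdeal I) (hC : IsIdeal C) (h : IsCompl I C) (x y : A) :
    I.projection C h (x * y) = I.projection C h x * I.projection C h y := by
  set π := I.projection C h
  have hsplit : x * y = π x * π y + (y * (x - π x) + π x * (y - π y)) := by
    rw [mul_sub, mul_sub, mul_comm y, mul_comm y]
    abel
  rw [hsplit, map_add,
    Submodule.projection_apply_of_mem_left h (hI _ _ (Submodule.projection_apply_mem h y)),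
    Submodule.projection_apply_of_mem_right h (add_mem (hC _ _ (Submodule.sub_projection_mem h x))
      (hC _ _ (Submodule.sub_projection_mem h y))), add_zero]

variable {F : Type*} [Field F] [Module F A] {B : BilinForm F A} {I : Submodule F A}

lemma spansAssociativeForms_of_finrank_eq_one {K J : Type*} [RCLike K]
    [NonUnitalNonAssocCommRing J] [Module K J] {B : BilinForm K J} (hsymm : B.IsSymm)
    (hB : IsAssociative B) (hne : B ≠ 0)
    (hind : Module.finrank K (assocSymmForms K J) = 1) : SpansAssociativeForms B := by
  intro T hT hT'
  let _ := Module.addCommMonoidToAddCommGroup K (M := assocSymmForms K J)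
  obtain ⟨c, hc⟩ := exists_smul_eq_of_finrank_eq_one hind
    (x := (⟨B, hsymm.eq, hB⟩ : assocSymmForms K J)) (fun h ↦ hne (congrArg Subtype.val h))
    ⟨T, hT.eq, hT'⟩
  exact ⟨c, (congrArg Subtype.val hc).symm⟩

/- With `π` the projection onto `I` along its orthogonal, `B (π x) (π y)` is again an associative
symmetric form, hence a multiple `c • B`. It vanishes on the orthogonal, so that `c = 0` or the
orthogonal is zero. -/
lemma IsIdeal.eq_bot_or_eq_top [FiniteDimensional F A] (hsymm : B.IsSymm)
    (hnondeg : B.SeparatingLeft) (hB : IsAssociative B) (hspan : SpansAssociativeForms B)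
    (hI : IsIdeal I) (hdisj : Disjoint I (B.orthogonal I)) : I = ⊥ ∨ I = ⊤ := by
  have hcompl : IsCompl I (B.orthogonal I) :=
    (BilinForm.isCompl_orthogonal_iff_disjoint hsymm.isRefl).mpr hdisj
  let π := I.projection (B.orthogonal I) hcompl
  obtain ⟨c, hc⟩ := hspan (B.compl₁₂ π π) ⟨fun x y ↦ hsymm.eq _ _⟩ fun x y z ↦ by
    simp [π, projection_mul hI (hI.orthogonal hB), hB _ _ _]
  have hπ (x y : A) : B (π x) (π y) = c * B x y := LinearMap.congr_fun₂ hc x y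
  rcases eq_or_ne c 0 with rfl | hc0
  · refine .inl ((Submodule.eq_bot_iff I).mpr fun i hi ↦ ?_)
    refine Submodule.disjoint_def.mp hdisj i hi fun j hj ↦ ?_
    have h := hπ j i
    rwa [Submodule.projection_apply_of_mem_left hcompl hi,
      Submodule.projection_apply_of_mem_left hcompl hj, zero_mul] at h
  · have hbot : B.orthogonal I = ⊥ := (Submodule.eq_bot_iff _).mpr fun j hj ↦ by
      refine hnondeg j fun y ↦ ?_
      have h := hπ j y
      rw [Submodule.projection_apply_of_mem_right hcompl hj, map_zero, LinearMap.zero_apply] at h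
      exact (mul_eq_zero.mp h.symm).resolve_left hc0
    exact .inr (by simpa [hbot] using hcompl.sup_eq_top)

/- If `v` annihilates `A`, then `(x, y) ↦ B v x * B v y` is an associative symmetric form of rank
one, hence a nonzero multiple of `B`. -/
lemma finrank_eq_one_and_mul_eq_zero_of_annihilator (hnondeg : B.SeparatingLeft)
    (hB : IsAssociative B) (hspan : SpansAssociativeForms B) {v : A} (hv : v ≠ 0)
    (hann : ∀ x, x * v = 0) : Module.finrank F A = 1 ∧ ∀ x y : A, x * y = 0 := by
  have hBv (x y : A) : B v (x * y) = 0 := by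
    rw [← hB, mul_comm, hann, map_zero, LinearMap.zero_apply]
  obtain ⟨c, hc⟩ := hspan ((LinearMap.mul F F).compl₁₂ (B v) (B v))
    ⟨fun x y ↦ by simp [mul_comm]⟩ fun x y z ↦ by simp [hBv]
  have hc' (x y : A) : B v x * B v y = c * B x y := LinearMap.congr_fun₂ hc x y
  obtain ⟨w, hw⟩ : ∃ w, B v w ≠ 0 := by
    by_contra! h
    exact hv (hnondeg v h)
  have hc0 : c ≠ 0 := by
    rintro rfl
    exact hw (mul_self_eq_zero.mp ((hc' w w).trans (zero_mul _)))
  have hker (x : A) (hx : B v x = 0) : x = 0 := hnondeg x fun y ↦ by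
    have h := hc' x y
    rw [hx, zero_mul] at h
    exact (mul_eq_zero.mp h.symm).resolve_left hc0
  refine ⟨finrank_eq_one w (fun h ↦ hw (by rw [h, map_zero])) fun x ↦
    ⟨B v x / B v w, sub_eq_zero.mp (hker _ ?_)⟩, fun x y ↦ hker _ (hBv x y)⟩
  rw [map_sub, map_smul, smul_eq_mul, div_mul_cancel₀ _ hw, sub_self]

end AssociativeForms

section TraceForm

variable {R A : Type*} [CommRing R] [NonUnitalNonAssocCommRing A] [Module R A]
  [SMulCommClass R A A] [IsScalarTower R A A]

local notation "L" => (LinearMap.mul R A : A →ₗ[R] Module.End R A)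

variable (R A) in
/-- The trace form `(x, y) ↦ tr (L (x * y))` of an algebra, where `L` denotes multiplication. -/
noncomputable def traceForm : BilinForm R A :=
  (LinearMap.mul R A).compr₂ (LinearMap.trace R A ∘ₗ LinearMap.mul R A)

lemma traceForm_apply (x y : A) : traceForm R A x y = LinearMap.trace R A (L (x * y)) := rfl

lemma traceForm_isSymm : (traceForm R A).IsSymm :=
  ⟨fun x y ↦ by rw [traceForm_apply, traceForm_apply, mul_comm]⟩

lemma traceForm_isAssociative [IsCommJordan A] [IsAddTorsionFree A] :
    IsAssociative (traceForm R A) := by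
  intro x y z
  have h := congrArg (LinearMap.trace R A) (lie_lie_lmul_lmul_lmul z x y)
  rw [LinearMap.trace_lie, map_sub, map_sub, eq_comm, sub_eq_zero] at h
  rwa [traceForm_apply, traceForm_apply, mul_comm (x * y), mul_comm y z]

lemma traceForm_apply_eq_zero_of_mem [IsReduced R] {I : Submodule R A} (hI : IsIdeal I)
    (hsq : ∀ i ∈ I, ∀ j ∈ I, i * j = 0) {i : A} (hi : i ∈ I) (x : A) :
    traceForm R A i x = 0 := by
  have hix : i * x ∈ I := mul_comm x i ▸ hI x i hi
  refine (LinearMap.isNilpotent_trace_of_isNilpotent ⟨2, LinearMap.ext fun y ↦ ?_⟩).eq_zero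
  rw [pow_two]
  exact hsq _ hix (i * x * y) (mul_comm y (i * x) ▸ hI y _ hix)

lemma IsIdeal.disjoint_orthogonal [IsReduced R] {B : BilinForm R A} {I : Submodule R A}
    (hI : IsIdeal I) (hnondeg : B.SeparatingLeft) (hB : IsAssociative B)
    (htr : (traceForm R A).SeparatingLeft) :
    Disjoint I (B.orthogonal I) :=
  Submodule.disjoint_def.mpr fun i hi hi' ↦ htr i <|
    traceForm_apply_eq_zero_of_mem (hI.inf (hI.orthogonal hB))
      (fun _ hj _ hk ↦ mul_eq_zero_of_mem_orthogonal hnondeg hB hI hj.1 hk.2) ⟨hi, hi'⟩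

lemma trace_lmul_mul_lmul [IsDomain R] [NeZero (2 : R)]
    (hnil : ∀ x : A, IsNilpotent (L x)) (x y : A) : LinearMap.trace R A (L x * L y) = 0 := by
  have hsq (z : A) : LinearMap.trace R A (L z * L z) = 0 :=
    (LinearMap.isNilpotent_trace_of_isNilpotent
      ((Commute.refl (L z)).isNilpotent_mul_right (hnil z))).eq_zero
  have h := hsq (x + y)
  rw [map_add, mul_add, add_mul, add_mul, map_add, map_add, map_add, hsq, hsq,
    LinearMap.trace_mul_comm R (L y), zero_add, add_zero, ← two_mul] at h
  exact (mul_eq_zero.mp h).resolve_left two_ne_zero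

end TraceForm

section NilAlgebras

variable {F A : Type*} [Field F] [NonUnitalNonAssocCommRing A] [Module F A]
  [SMulCommClass F A A] [IsScalarTower F A A] [FiniteDimensional F A]

local notation "L" => (LinearMap.mul F A : A →ₗ[F] Module.End F A)

lemma trace_lmul_mul_lie_lmul_lmul {B : BilinForm F A} (hnondeg : B.Nondegenerate)
    (hB : IsAssociative B) (x y z : A) : LinearMap.trace F A (L x * ⁅L y, L z⁆) = 0 := by
  have hadj (a : A) : LinearMap.IsAdjointPair B B (L a) (L a) := fun u v ↦ by
    rw [LinearMap.mul_apply', LinearMap.mul_apply', mul_comm a u, hB]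
  have hrev : LinearMap.trace F A (L x * (L y * L z)) = LinearMap.trace F A (L z * L y * L x) :=
    trace_eq_of_isAdjointPair hnondeg ((hadj x).mul ((hadj y).mul (hadj z)))
  rw [Ring.lie_def, mul_sub, map_sub, hrev, LinearMap.trace_mul_comm, sub_self]

variable [CharZero F] [IsCommJordan A]

lemma isNilpotent_lmul_of_traceForm_eq_zero (h : traceForm F A = 0) (x : A) :
    IsNilpotent (L x) := by
  have : IsAddTorsionFree A := .of_isTorsionFree F A
  by_contra hx
  obtain ⟨f, he, hee⟩ := exists_evalXMul_ne_zero_isIdempotentElem (F := F)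
    fun k hk ↦ hx (isNilpotent_lmul_of_iterate_sq_eq_zero (k := k) hk)
  refine trace_lmul_ne_zero_of_isIdempotentElem (F := F) he hee ?_
  rw [← hee.eq, ← traceForm_apply, h, LinearMap.zero_apply, LinearMap.zero_apply]

lemma exists_ne_zero_forall_mul_eq_zero [Nontrivial A] {B : BilinForm F A}
    (hnondeg : B.Nondegenerate) (hB : IsAssociative B) (hnil : ∀ x : A, IsNilpotent (L x)) :
    ∃ v : A, v ≠ 0 ∧ ∀ x, x * v = 0 := by
  have : IsAddTorsionFree A := .of_isTorsionFree F A
  have hT := isLieTripleSystem_range_lmul F A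
  have htr : LieModule.traceForm F hT.toLieSubalgebra A = 0 := by
    refine hT.traceForm_toLieSubalgebra ?_ ?_
    · rintro _ ⟨x, rfl⟩ _ ⟨y, rfl⟩
      exact trace_lmul_mul_lmul hnil x y
    · rintro _ ⟨x, rfl⟩ _ ⟨y, rfl⟩ _ ⟨z, rfl⟩
      exact trace_lmul_mul_lie_lmul_lmul hnondeg hB x y z
  obtain ⟨N, hN, hcomm⟩ := exists_lieSubmodule_ne_bot_lie_comm_of_traceForm_eq_zero htr
  let l (x : A) : hT.toLieSubalgebra := ⟨L x, Submodule.mem_sup_left ⟨x, rfl⟩⟩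
  obtain ⟨v, -, hv⟩ := exists_mem_ne_zero_forall_apply_eq_zero hnil
    (mt (LieSubmodule.toSubmodule_eq_bot N).mp hN) (fun x v hv ↦ N.lie_mem (x := l x) hv)
    fun x y ↦ hcomm (l x) (l y)
  exact ⟨v, hv⟩

end NilAlgebras

end JordanAlgebra

open JordanAlgebra in
theorem simple_or_one_dimensional_of_index_one_general {F A : Type*} [Field F] [CharZero F]
    [NonUnitalNonAssocCommRing A] [IsCommJordan A] [Nontrivial A] [Module F A]
    [SMulCommClass F A A] [IsScalarTower F A A] [FiniteDimensional F A]
    {B : LinearMap.BilinForm F A} (hsymm : B.IsSymm) (hnondeg : B.Nondegenerate)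
    (hassoc : IsAssociative B) (hspan : SpansAssociativeForms B) :
    ((∃ x y : A, x * y ≠ 0) ∧ ∀ I : Submodule F A, IsIdeal I → I = ⊥ ∨ I = ⊤) ∨
      (Module.finrank F A = 1 ∧ ∀ x y : A, x * y = 0) := by
  have : IsAddTorsionFree A := .of_isTorsionFree F A
  obtain ⟨c, hc⟩ := hspan (traceForm F A) traceForm_isSymm traceForm_isAssociative
  rcases eq_or_ne c 0 with rfl | hc0
  · obtain ⟨v, hv, hann⟩ := exists_ne_zero_forall_mul_eq_zero hnondeg hassoc
      (isNilpotent_lmul_of_traceForm_eq_zero (hc.trans (zero_smul F B)))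
    exact .inr (finrank_eq_one_and_mul_eq_zero_of_annihilator hnondeg.1 hassoc hspan hv hann)
  · have htr : (traceForm F A).SeparatingLeft := fun x hx ↦ hnondeg.1 x fun y ↦
      (mul_eq_zero.mp ((DFunLike.congr_fun (DFunLike.congr_fun hc x) y).symm.trans
        (hx y))).resolve_left hc0
    refine .inl ⟨?_, fun I hI ↦ hI.eq_bot_or_eq_top hsymm hnondeg.1 hassoc hspan
      (hI.disjoint_orthogonal hnondeg.1 hassoc htr)⟩
    by_contra! hmul
    obtain ⟨x, hx⟩ := exists_ne (0 : A)
    exact hx (htr x fun y ↦ by rw [traceForm_apply, hmul, map_zero, map_zero])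

open JordanAlgebra in
/-- let `K` be `ℝ` or `ℂ` and `(J, B)` a pseudo-euclidean Jordan algebra over
`K` with `ind(J) = 1` (the space of associative symmetric bilinear forms on `J` is
one-dimensional).  Then `J` is simple, or `J` is the one-dimensional algebra with zero
product. -/
theorem simple_or_one_dimensional_of_index_one
    {K : Type*} [RCLike K]
    {J : Type*} [NonUnitalNonAssocCommRing J] [Module K J]
    [SMulCommClass K J J] [IsScalarTower K J J] [FiniteDimensional K J]
    (hjordan : ∀ x y : J, (x * y) * (x * x) = x * (y * (x * x)))
    (B : J →ₗ[K] J →ₗ[K] K)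
    (hsymm : ∀ x y : J, B x y = B y x)
    (hnondeg : ∀ x : J, (∀ y : J, B x y = 0) → x = 0)
    (hassoc : ∀ x y z : J, B (x * y) z = B x (y * z))
    (hind : Module.finrank K (assocSymmForms K J) = 1) :
    -- `J` is simple …
    ((∃ x y : J, x * y ≠ 0) ∧
      (∀ I : Submodule K J, (∀ x : J, ∀ i ∈ I, x * i ∈ I) → I = ⊥ ∨ I = ⊤)) ∨
    -- … or `J` is the one-dimensional algebra with zero product
    (Module.finrank K J = 1 ∧ ∀ x y : J, x * y = 0) := by
  have : IsCommJordan J := ⟨hjordan⟩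
  have : Nontrivial J := by
    by_contra! _
    exact zero_ne_one (Module.finrank_zero_of_subsingleton.symm.trans hind)
  have hB : B.Nondegenerate := ⟨hnondeg, fun y h ↦ hnondeg y fun x ↦ (hsymm y x).trans (h x)⟩
  exact simple_or_one_dimensional_of_index_one_general ⟨hsymm⟩ hB hassoc
    (spansAssociativeForms_of_finrank_eq_one ⟨hsymm⟩ hassoc
      (LinearMap.BilinForm.Nondegenerate.ne_zero hB) hind)
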